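/- arXiv:math/0304189 — 2 statements merged into one kernel-verified Lean document; each statement's English description precedes it below -/
import Mathlib

section
/- (Addition formula / Weierstrass three-term identity for theta functions.) For all nonzero complex numbers x, y, z, w one has θ(xy)θ(x/y)θ(zw)θ(z/w) = θ(xw)θ(x/w)θ(zy)θ(z/y) + (z/y)·θ(xz)θ(x/z)θ(yw)θ(y/w). -/
noncomputable section

open Finset

/-- The normalized Jacobi theta function `θ(z) = ∏_{j≥0} (1 - z p^j)(1 - p^{j+1}/z)`. -/
def theta (p : ℝ) (z : ℂ) : ℂ :=
  ∏' j : ℕ, ((1 - z * (p : ℂ) ^ j) * (1 - (p : ℂ) ^ (j + 1) / z))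

/-- Complex power `q ^ l := exp (l · log q)` for a real base `q`. -/
def qp (q : ℝ) (l : ℂ) : ℂ := Complex.exp (l * (Real.log q : ℂ))

/-- Elliptic Pochhammer symbol `(a)_n = ∏_{i=0}^{n-1} θ(a q^{2i})` in base `q², p`. -/
def epoch (p q : ℝ) (a : ℂ) (n : ℕ) : ℂ :=
  ∏ i ∈ Finset.range n, theta p (a * qp q (2 * (i : ℂ)))

/-- Elliptic binomial coefficient `[k over l] = ∏_{i=1}^{l} θ(q^{2(k-l+i)})/θ(q^{2i})`. -/
def ellbin (p q : ℝ) (k l : ℕ) : ℂ :=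
  ∏ i ∈ Finset.range l,
    theta p (qp q (2 * ((k : ℂ) - (l : ℂ) + (i : ℂ) + 1))) / theta p (qp q (2 * ((i : ℂ) + 1)))

/-- Entry `a(λ,z)` of the Andrews–Baxter–Forrester `R`-matrix. -/
def Ra (p q : ℝ) (lam z : ℂ) : ℂ :=
  theta p z * theta p (qp q (2 * (lam + 2))) /
    (theta p (qp q 2 * z) * theta p (qp q (2 * (lam + 1))))

/-- Entry `b(λ,z)` of the Andrews–Baxter–Forrester `R`-matrix. -/
def Rb (p q : ℝ) (lam z : ℂ) : ℂ :=
  theta p (qp q 2) * theta p (qp q (-2 * (lam + 1)) * z) /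
    (theta p (qp q 2 * z) * theta p (qp q (-2 * (lam + 1))))

/-- Entry `c(λ,z)` of the Andrews–Baxter–Forrester `R`-matrix. -/
def Rc (p q : ℝ) (lam z : ℂ) : ℂ :=
  theta p (qp q 2) * theta p (qp q (2 * (lam + 1)) * z) /
    (theta p (qp q 2 * z) * theta p (qp q (2 * (lam + 1))))

/-- Entry `d(λ,z)` of the Andrews–Baxter–Forrester `R`-matrix. -/
def Rd (p q : ℝ) (lam z : ℂ) : ℂ :=
  theta p z * theta p (qp q (-2 * lam)) /
    (theta p (qp q 2 * z) * theta p (qp q (-2 * (lam + 1))))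

/-- Coefficient `A_k(λ,z)` of the Felder–Varchenko dynamical representation `π^ω`. -/
def Ak (p q : ℝ) (om : ℂ) (k : ℕ) (lam z : ℂ) : ℂ :=
  qp q (2 * (k : ℂ)) * theta p (qp q (-2 * (lam + 1) - 2 * (k : ℂ))) *
      theta p (z * qp q (om - 2 * (k : ℂ) + 1)) /
    (theta p (qp q (-2 * (lam + 1))) * theta p (z * qp q (om + 1)))

/-- Coefficient `B_k(λ,z)` of the Felder–Varchenko dynamical representation `π^ω`. -/
def Bk (p q : ℝ) (om : ℂ) (k : ℕ) (lam z : ℂ) : ℂ :=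
  qp q (k : ℂ) * theta p (qp q 2) *
      theta p (z * qp q (-2 * (lam + 1) + om - 2 * (k : ℂ) - 1)) /
    (theta p (qp q (-2 * (lam + 1))) * theta p (z * qp q (om + 1)))

/-- Coefficient `C_k(λ,z)` of the Felder–Varchenko dynamical representation `π^ω`;
`C_0 = 0`. -/
def Ck (p q : ℝ) (om : ℂ) (k : ℕ) (lam z : ℂ) : ℂ :=
  if k = 0 then 0
  else
    qp q (-((k : ℂ) - 1)) * theta p (qp q (2 * (k : ℂ))) *
        theta p (qp q (2 * (om - (k : ℂ) + 1))) *
        theta p (z * qp q (2 * (lam + 1) - om + 2 * (k : ℂ) - 1)) /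
      (theta p (qp q 2) * theta p (qp q (2 * (lam + 1))) * theta p (z * qp q (om + 1)))

/-- Coefficient `D_k(λ,z)` of the Felder–Varchenko dynamical representation `π^ω`. -/
def Dk (p q : ℝ) (om : ℂ) (k : ℕ) (lam z : ℂ) : ℂ :=
  theta p (qp q (-2 * (lam + 1 - om + (k : ℂ)))) * theta p (z * qp q (-om + 2 * (k : ℂ) + 1)) /
    (theta p (qp q (-2 * (lam + 1))) * theta p (z * qp q (om + 1)))

/-- `F(μ) = q^μ θ(q^{-2(μ+1)})`. -/
def Fdet (p q : ℝ) (mu : ℂ) : ℂ := qp q mu * theta p (qp q (-2 * (mu + 1)))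

/-- The coefficient `C_{kl}(μ)` from the corepresentation matrix elements. -/
def Ckl (p q : ℝ) (k l : ℕ) (mu : ℂ) : ℂ :=
  ellbin p q k l * epoch p q (qp q (2 * (mu - (l : ℂ) + 2))) l /
    epoch p q (qp q (2 * (mu + (k : ℂ) - 2 * (l : ℂ) + 2))) l

/-- The terminating balanced very-well-poised elliptic hypergeometric series
`₁₀ω₉(a₁; a₄,…,a₁₀)`, truncated at `n`. -/
def tenW9 (p q : ℝ) (n : ℕ) (a1 a4 a5 a6 a7 a8 a9 a10 : ℂ) : ℂ :=
  ∑ k ∈ Finset.range (n + 1),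
    theta p (a1 * qp q (4 * (k : ℂ))) / theta p a1 *
      (epoch p q a1 k * epoch p q a4 k * epoch p q a5 k * epoch p q a6 k * epoch p q a7 k *
        epoch p q a8 k * epoch p q a9 k * epoch p q a10 k * qp q (2 * (k : ℂ))) /
      (epoch p q (qp q 2) k * epoch p q (a1 * qp q 2 / a4) k * epoch p q (a1 * qp q 2 / a5) k *
        epoch p q (a1 * qp q 2 / a6) k * epoch p q (a1 * qp q 2 / a7) k *
        epoch p q (a1 * qp q 2 / a8) k * epoch p q (a1 * qp q 2 / a9) k *
        epoch p q (a1 * qp q 2 / a10) k)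

/-- The product of all theta factors appearing in denominators of the terms of
`tenW9 p q n a1 a4 … a10` (including the `θ(a₁)` from the very-well-poised prefactor). -/
def tenW9Den (p q : ℝ) (n : ℕ) (a1 a4 a5 a6 a7 a8 a9 a10 : ℂ) : ℂ :=
  theta p a1 * epoch p q (qp q 2) n * epoch p q (a1 * qp q 2 / a4) n *
    epoch p q (a1 * qp q 2 / a5) n * epoch p q (a1 * qp q 2 / a6) n *
    epoch p q (a1 * qp q 2 / a7) n * epoch p q (a1 * qp q 2 / a8) n *
    epoch p q (a1 * qp q 2 / a9) n * epoch p q (a1 * qp q 2 / a10) n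

/-!
The Jacobi triple product writes `θ(z)` as a constant multiple of the theta series
`∑ₙ p ^ (n(n-1)/2) (-z)ⁿ`. It is the termwise limit of a finite identity in which the series is
weighted by central Gaussian binomial coefficients; that identity follows from the two Pascal
rules, one for each of the two kinds of factors in the product.

Multiplying the series at `xy` and `x/y` and splitting the pairs of indices `(m, n)` by the parity
of `m + n` separates the variables: up to a constant,
`θ(xy) θ(x/y) = A(x) B(y) - (x/y) B(x) A(y)`, where `A(u) = ∑ₙ p ^ (n(n-1)) u²ⁿ` and
`B(u) = ∑ₙ p ^ n² u²ⁿ`. This is `x` times the `2 × 2` determinant of the vectors `(A(x)/x, B(x))`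
and `(A(y)/y, B(y))`, so the addition formula is the three-term Plücker relation among the minors
of a `2 × 4` matrix.
-/

open Filter Topology

theorem hasSum_prod_of_add_even_of_add_odd {M : Type*} [AddCommMonoid M] [TopologicalSpace M]
    [ContinuousAdd M] {f : ℤ × ℤ → M} {s t : M}
    (heven : HasSum (fun q : ℤ × ℤ => f (q.1 + q.2, q.1 - q.2)) s)
    (hodd : HasSum (fun q : ℤ × ℤ => f (q.1 + q.2, q.1 - q.2 + 1)) t) :
    HasSum f (s + t) := by
  let e : ℤ × ℤ → ℤ × ℤ := fun q => (q.1 + q.2, q.1 - q.2)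
  let o : ℤ × ℤ → ℤ × ℤ := fun q => (q.1 + q.2, q.1 - q.2 + 1)
  have he : e.Injective := fun a b h => by grind
  have ho : o.Injective := fun a b h => by grind
  have hcompl : IsCompl (Set.range e) (Set.range o) := by
    refine ⟨Set.disjoint_left.2 ?_, codisjoint_iff_le_sup.2 fun ⟨m, n⟩ _ => ?_⟩
    · rintro _ ⟨a, rfl⟩ ⟨b, h⟩
      grind
    · obtain ⟨c, h | h⟩ := Int.even_or_odd' (m + n)
      · exact .inl ⟨(c, m - c), by grind⟩
      · exact .inr ⟨(c, m - c), by grind⟩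
  exact (he.hasSum_range_iff.2 heven).add_isCompl hcompl (ho.hasSum_range_iff.2 hodd)

section GaussianBinomial

variable {K : Type*} [Field K] {p : K}

/-- The finite Euler product `(p; p)ₙ = ∏_{i=1}^{n} (1 - pⁱ)`. -/
def eulerProd (p : K) (n : ℕ) : K :=
  ∏ i ∈ range n, (1 - p ^ (i + 1))

/-- The reciprocal `1 / (p; p)ₖ` for an integer `k`, with the usual convention that it vanishes
for `k < 0`. -/
def invEulerProd (p : K) : ℤ → K
  | Int.ofNat n => (eulerProd p n)⁻¹
  | Int.negSucc _ => 0

/-- The Gaussian binomial coefficient `(p; p)ₙ / ((p; p)ₖ (p; p)ₙ₋ₖ)`. The lower index is an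
integer, so that the coefficient vanishes for `k < 0` and for `k > n`. -/
def gaussBinom (p : K) (n : ℕ) (k : ℤ) : K :=
  eulerProd p n * invEulerProd p k * invEulerProd p (n - k)

theorem one_sub_pow_ne_zero (hp : ¬IsOfFinOrder p) (n : ℕ) : 1 - p ^ (n + 1) ≠ 0 :=
  sub_ne_zero.2 fun h => hp (isOfFinOrder_iff_pow_eq_one.2 ⟨n + 1, n.succ_pos, h.symm⟩)

theorem eulerProd_zero : eulerProd p 0 = 1 :=
  prod_range_zero _

theorem eulerProd_succ (n : ℕ) : eulerProd p (n + 1) = eulerProd p n * (1 - p ^ (n + 1)) :=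
  prod_range_succ _ n

theorem invEulerProd_natCast (n : ℕ) : invEulerProd p n = (eulerProd p n)⁻¹ :=
  rfl

theorem invEulerProd_zero : invEulerProd p 0 = 1 := by
  simpa [eulerProd_zero] using invEulerProd_natCast (p := p) 0

theorem invEulerProd_of_neg {k : ℤ} (hk : k < 0) : invEulerProd p k = 0 := by
  obtain ⟨n, rfl⟩ := Int.eq_negSucc_of_lt_zero hk
  rfl

theorem invEulerProd_sub_one (hp : ¬IsOfFinOrder p) (k : ℤ) :
    invEulerProd p (k - 1) = (1 - p ^ k) * invEulerProd p k := by
  obtain hk | rfl | hk := lt_trichotomy k 0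
  · simp [invEulerProd_of_neg hk, invEulerProd_of_neg (show k - 1 < 0 by lia)]
  · simp [invEulerProd_of_neg]
  · obtain ⟨n, rfl⟩ : ∃ n : ℕ, k = (n + 1 : ℕ) := ⟨(k - 1).toNat, by lia⟩
    have hn := one_sub_pow_ne_zero hp n
    rw [show ((n + 1 : ℕ) : ℤ) - 1 = n by lia, invEulerProd_natCast, invEulerProd_natCast,
      eulerProd_succ, zpow_natCast, mul_inv_rev, mul_inv_cancel_left₀ hn]

theorem gaussBinom_zero (k : ℤ) : gaussBinom p 0 k = if k = 0 then 1 else 0 := by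
  obtain hk | rfl | hk := lt_trichotomy k 0
  · simp [gaussBinom, invEulerProd_of_neg hk, hk.ne]
  · simp [gaussBinom, eulerProd_zero, invEulerProd_zero]
  · simp [gaussBinom, invEulerProd_of_neg (neg_lt_zero.2 hk), hk.ne']

theorem gaussBinom_symm (n : ℕ) (k : ℤ) : gaussBinom p n (n - k) = gaussBinom p n k := by
  simp only [gaussBinom, sub_sub_cancel]
  ring

theorem gaussBinom_succ (hp : ¬IsOfFinOrder p) (hp0 : p ≠ 0) (n : ℕ) (k : ℤ) :
    gaussBinom p (n + 1) k =
      gaussBinom p n k + p ^ ((n : ℤ) + 1 - k) * gaussBinom p n (k - 1) := by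
  have h₁ := invEulerProd_sub_one hp k
  have h₂ := invEulerProd_sub_one hp ((n : ℤ) + 1 - k)
  have hpow : p ^ (n + 1) = p ^ ((n : ℤ) + 1 - k) * p ^ k := by
    rw [← zpow_add₀ hp0, sub_add_cancel]
    exact_mod_cast (zpow_natCast p (n + 1)).symm
  rw [show (n : ℤ) + 1 - k - 1 = n - k by ring] at h₂
  simp only [gaussBinom, eulerProd_succ, Nat.cast_succ, hpow, h₁, h₂,
    show (n : ℤ) - (k - 1) = n + 1 - k by ring]
  ring

theorem gaussBinom_succ' (hp : ¬IsOfFinOrder p) (hp0 : p ≠ 0) (n : ℕ) (k : ℤ) :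
    gaussBinom p (n + 1) k = p ^ k * gaussBinom p n k + gaussBinom p n (k - 1) := by
  rw [← gaussBinom_symm, gaussBinom_succ hp hp0, Nat.cast_succ, sub_sub_cancel,
    ← gaussBinom_symm n k, ← gaussBinom_symm n (k - 1), add_comm]
  ring_nf

end GaussianBinomial

section ThetaTerm

variable {K : Type*} [Field K] {p x y z : K}

/-- The general term `p ^ (n(n-1)/2) zⁿ` of the bilateral theta series; the integer division is
exact. -/
def thetaTerm (p z : K) (n : ℤ) : K :=
  p ^ (n * (n - 1) / 2) * z ^ n

theorem thetaTerm_add_one (hp : p ≠ 0) (hz : z ≠ 0) (n : ℤ) :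
    thetaTerm p z (n + 1) = z * p ^ n * thetaTerm p z n := by
  have h : (n + 1) * (n + 1 - 1) / 2 = n * (n - 1) / 2 + n := by
    rw [show (n + 1) * (n + 1 - 1) = n * (n - 1) + n * 2 by ring,
      Int.add_mul_ediv_right _ _ two_ne_zero]
  rw [thetaTerm, thetaTerm, h, zpow_add₀ hp, zpow_add_one₀ hz]
  ring

theorem thetaTerm_neg (hp : p ≠ 0) (n : ℤ) : thetaTerm p z (-n) = thetaTerm p (p / z) n := by
  have h : -n * (-n - 1) / 2 = n * (n - 1) / 2 + n := by
    rw [show -n * (-n - 1) = n * (n - 1) + n * 2 by ring,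
      Int.add_mul_ediv_right _ _ two_ne_zero]
  rw [thetaTerm, thetaTerm, h, zpow_add₀ hp, div_zpow, zpow_neg]
  ring

theorem two_mul_mul_sub_one_ediv_two (n : ℤ) : 2 * (n * (n - 1) / 2) = n * (n - 1) :=
  Int.two_mul_ediv_two_of_even (Int.even_mul_pred_self n)

theorem thetaTerm_sq (p z : K) (n : ℤ) : thetaTerm (p ^ 2) z n = p ^ (n * (n - 1)) * z ^ n := by
  rw [thetaTerm, ← zpow_natCast p 2, ← zpow_mul, Nat.cast_two, two_mul_mul_sub_one_ediv_two]

theorem thetaTerm_mul_mul_thetaTerm_div (hp : p ≠ 0) (hx : x ≠ 0) (hy : y ≠ 0) (m n : ℤ) :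
    thetaTerm p (x * y) m * thetaTerm p (x / y) n =
      p ^ (m * (m - 1) / 2 + n * (n - 1) / 2) * x ^ (m + n) * y ^ (m - n) := by
  rw [thetaTerm, thetaTerm, mul_zpow, div_zpow, zpow_add₀ hp, zpow_add₀ hx, zpow_sub₀ hy]
  ring

theorem thetaTerm_mul_thetaTerm_of_even (hp : p ≠ 0) (hx : x ≠ 0) (hy : y ≠ 0) (a b : ℤ) :
    thetaTerm p (x * y) (a + b) * thetaTerm p (x / y) (a - b) =
      thetaTerm (p ^ 2) (x ^ 2) a * thetaTerm (p ^ 2) (p * y ^ 2) b := by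
  have hexp : (a + b) * (a + b - 1) / 2 + (a - b) * (a - b - 1) / 2 =
      a * (a - 1) + b * (b - 1) + b := by
    refine Int.eq_of_mul_eq_mul_left two_ne_zero ?_
    linear_combination two_mul_mul_sub_one_ediv_two (a + b) + two_mul_mul_sub_one_ediv_two (a - b)
  rw [thetaTerm_mul_mul_thetaTerm_div hp hx hy, hexp, thetaTerm_sq, thetaTerm_sq, mul_zpow,
    zpow_add₀ hp, zpow_add₀ hp, ← zpow_natCast, ← zpow_natCast, ← zpow_mul, ← zpow_mul,
    show a + b + (a - b) = (2 : ℕ) * a by push_cast; ring,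
    show a + b - (a - b) = (2 : ℕ) * b by push_cast; ring]
  ring

theorem thetaTerm_mul_thetaTerm_of_odd (hp : p ≠ 0) (hx : x ≠ 0) (hy : y ≠ 0) (a b : ℤ) :
    thetaTerm p (x * y) (a + b) * thetaTerm p (x / y) (a - b + 1) =
      x / y * (thetaTerm (p ^ 2) (p * x ^ 2) a * thetaTerm (p ^ 2) (y ^ 2) b) := by
  have hexp : (a + b) * (a + b - 1) / 2 + (a - b + 1) * (a - b + 1 - 1) / 2 =
      a * (a - 1) + a + b * (b - 1) := by
    refine Int.eq_of_mul_eq_mul_left two_ne_zero ?_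
    linear_combination
      two_mul_mul_sub_one_ediv_two (a + b) + two_mul_mul_sub_one_ediv_two (a - b + 1)
  rw [thetaTerm_mul_mul_thetaTerm_div hp hx hy, hexp, thetaTerm_sq, thetaTerm_sq, mul_zpow,
    zpow_add₀ hp, zpow_add₀ hp, ← zpow_natCast, ← zpow_natCast, ← zpow_mul, ← zpow_mul,
    show a + b + (a - b + 1) = (2 : ℕ) * a + 1 by push_cast; ring,
    show a + b - (a - b + 1) = (2 : ℕ) * b - 1 by push_cast; ring,
    zpow_add_one₀ hx, zpow_sub_one₀ hy]
  ring

variable [TopologicalSpace K] [IsTopologicalSemiring K]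

theorem hasSum_gaussBinom_mul_thetaTerm (hp : ¬IsOfFinOrder p) (hp0 : p ≠ 0) (hz : z ≠ 0)
    (N : ℕ) :
    HasSum (fun n : ℤ => gaussBinom p N n * thetaTerm p z n) (∏ j ∈ range N, (1 + z * p ^ j)) := by
  induction N with
  | zero =>
    convert hasSum_ite_eq (0 : ℤ) (1 : K) using 2 with n
    · rcases eq_or_ne n 0 with rfl | hn <;> simp [gaussBinom_zero, thetaTerm, *]
    · exact prod_range_zero _
  | succ N ih =>
    have shifted := ((Equiv.subRight (1 : ℤ)).hasSum_iff.2 ih).mul_left (z * p ^ N)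
    convert ih.add shifted using 1
    · ext n
      have hpow : p ^ ((N : ℤ) + 1 - n) * p ^ (n - 1) = p ^ N := by
        rw [← zpow_add₀ hp0, ← zpow_natCast]
        ring_nf
      have hterm := thetaTerm_add_one hp0 hz (n - 1)
      rw [sub_add_cancel] at hterm
      simp only [Function.comp_apply, Equiv.subRight_apply, gaussBinom_succ hp hp0, ← hpow, hterm]
      ring
    · rw [prod_range_succ]
      ring

theorem finite_jacobi_triple_product (hp : ¬IsOfFinOrder p) (hp0 : p ≠ 0) (hz : z ≠ 0)
    (M N : ℕ) :
    HasSum (fun n : ℤ => gaussBinom p (M + N) (N + n) * thetaTerm p z n)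
      ((∏ j ∈ range M, (1 + z * p ^ j)) * ∏ j ∈ range N, (1 + p ^ (j + 1) / z)) := by
  induction N with
  | zero => simpa using hasSum_gaussBinom_mul_thetaTerm hp hp0 hz M
  | succ N ih =>
    have shifted := ((Equiv.addRight (1 : ℤ)).hasSum_iff.2 ih).mul_left (p ^ (N + 1) / z)
    convert ih.add shifted using 1
    · ext n
      have hpow : p ^ ((N : ℤ) + n + 1) = p ^ (N + 1) * p ^ n := by
        rw [add_right_comm, zpow_add₀ hp0]
        norm_cast
      simp only [Function.comp_apply, Equiv.coe_addRight, ← add_assoc, gaussBinom_succ' hp hp0,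
        Nat.cast_succ, add_right_comm (N : ℤ) 1 n, add_sub_cancel_right, hpow,
        thetaTerm_add_one hp0 hz]
      field_simp
      ring
    · rw [prod_range_succ _ N]
      ring

end ThetaTerm

section TripleProduct

variable {𝕜 : Type*} [NormedField 𝕜] {p z : 𝕜}

theorem not_isOfFinOrder_of_norm_lt_one (hp : ‖p‖ < 1) : ¬IsOfFinOrder p :=
  fun h => hp.ne h.norm_eq_one

theorem summable_norm_pow_succ (hp : ‖p‖ < 1) : Summable fun n : ℕ => ‖p ^ (n + 1)‖ :=
  (summable_nat_add_iff (f := fun n : ℕ => ‖p ^ n‖) 1).2 (summable_norm_geometric_of_norm_lt_one hp)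

theorem summable_norm_thetaTerm_natCast (hp0 : p ≠ 0) (hp : ‖p‖ < 1) (hz : z ≠ 0) :
    Summable fun n : ℕ => ‖thetaTerm p z n‖ := by
  have hratio : Tendsto (fun n : ℕ => ‖z * p ^ n‖) atTop (𝓝 0) := by
    simpa using ((tendsto_pow_atTop_nhds_zero_of_norm_lt_one hp).const_mul z).norm
  refine summable_of_ratio_norm_eventually_le one_half_lt_one ?_
  filter_upwards [hratio.eventually_le_const one_half_pos] with n hn
  rw [Nat.cast_succ, thetaTerm_add_one hp0 hz, norm_norm, norm_norm, norm_mul, zpow_natCast]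
  gcongr

theorem summable_norm_thetaTerm (hp0 : p ≠ 0) (hp : ‖p‖ < 1) (hz : z ≠ 0) :
    Summable fun n : ℤ => ‖thetaTerm p z n‖ := by
  refine .of_nat_of_neg (summable_norm_thetaTerm_natCast hp0 hp hz) ?_
  simpa only [thetaTerm_neg hp0] using
    summable_norm_thetaTerm_natCast hp0 hp (div_ne_zero hp0 hz)

/-- The bilateral theta series `∑_{n ∈ ℤ} p ^ (n(n-1)/2) zⁿ`. -/
def thetaSeries (p z : 𝕜) : 𝕜 :=
  ∑' n : ℤ, thetaTerm p z n

variable [CompleteSpace 𝕜]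

theorem tendsto_eulerProd (hp : ‖p‖ < 1) :
    Tendsto (eulerProd p) atTop (𝓝 (∏' n : ℕ, (1 - p ^ (n + 1)))) := by
  have h := multipliable_one_add_of_summable (f := fun n : ℕ => -p ^ (n + 1))
    (by simpa only [norm_neg] using summable_norm_pow_succ hp)
  simp only [← sub_eq_add_neg] at h
  exact h.hasProd.tendsto_prod_nat

theorem tprod_one_sub_pow_ne_zero (hp : ‖p‖ < 1) : ∏' n : ℕ, (1 - p ^ (n + 1)) ≠ 0 := by
  have hfactor := one_sub_pow_ne_zero (not_isOfFinOrder_of_norm_lt_one hp)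
  simp only [sub_eq_add_neg] at hfactor ⊢
  exact tprod_one_add_ne_zero_of_summable hfactor
    (by simpa only [norm_neg] using summable_norm_pow_succ hp)

theorem tendsto_invEulerProd (hp : ‖p‖ < 1) :
    Tendsto (invEulerProd p) atTop (𝓝 (∏' n : ℕ, (1 - p ^ (n + 1)))⁻¹) := by
  rw [← Nat.map_cast_int_atTop, tendsto_map'_iff]
  exact (tendsto_eulerProd hp).inv₀ (tprod_one_sub_pow_ne_zero hp)

theorem exists_norm_invEulerProd_le (hp : ‖p‖ < 1) : ∃ C, ∀ k : ℤ, ‖invEulerProd p k‖ ≤ C := by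
  have hlim := (tendsto_invEulerProd hp).comp tendsto_natCast_atTop_atTop
  obtain ⟨C, hC⟩ := (Metric.isBounded_range_of_tendsto _ hlim).exists_norm_le
  refine ⟨C, fun k => ?_⟩
  obtain hk | hk := lt_or_ge k 0
  · simpa [invEulerProd_of_neg hk] using (norm_nonneg _).trans (hC _ ⟨0, rfl⟩)
  · obtain ⟨n, rfl⟩ := Int.eq_ofNat_of_zero_le hk
    exact hC _ ⟨n, rfl⟩

theorem exists_norm_gaussBinom_le (hp : ‖p‖ < 1) :
    ∃ C, ∀ (n : ℕ) (k : ℤ), ‖gaussBinom p n k‖ ≤ C := by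
  obtain ⟨B, hB⟩ := (Metric.isBounded_range_of_tendsto _ (tendsto_eulerProd hp)).exists_norm_le
  obtain ⟨C, hC⟩ := exists_norm_invEulerProd_le hp
  have hC0 : 0 ≤ C := (norm_nonneg _).trans (hC 0)
  have hB0 : 0 ≤ B := (norm_nonneg _).trans (hB _ ⟨0, rfl⟩)
  refine ⟨B * C * C, fun n k => ?_⟩
  rw [gaussBinom, norm_mul, norm_mul]
  gcongr
  exacts [hB _ ⟨n, rfl⟩, hC _, hC _]

theorem tendsto_gaussBinom_central (hp : ‖p‖ < 1) (n : ℤ) :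
    Tendsto (fun N : ℕ => gaussBinom p (N + N) (N + n)) atTop
      (𝓝 (∏' n : ℕ, (1 - p ^ (n + 1)))⁻¹) := by
  have hcast : Tendsto (fun N : ℕ => (N : ℤ)) atTop atTop := tendsto_natCast_atTop_atTop
  have hnum := (tendsto_eulerProd hp).comp (tendsto_id.atTop_add_atTop tendsto_id)
  have hleft := (tendsto_invEulerProd hp).comp (tendsto_atTop_add_const_right _ n hcast)
  have hright := (tendsto_invEulerProd hp).comp (tendsto_atTop_add_const_right _ (-n) hcast)
  convert (hnum.mul hleft).mul hright using 2 with N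
  · simp only [gaussBinom, Function.comp_apply, id, Nat.cast_add,
      show (N : ℤ) + N - (N + n) = N + -n by ring]
  · rw [mul_inv_cancel₀ (tprod_one_sub_pow_ne_zero hp), one_mul]

theorem multipliable_jacobi_triple_product (hp : ‖p‖ < 1) (z : 𝕜) :
    Multipliable fun j : ℕ => (1 + z * p ^ j) * (1 + p ^ (j + 1) / z) := by
  refine (multipliable_one_add_of_summable ?_).mul (multipliable_one_add_of_summable ?_)
  · simpa only [norm_mul] using (summable_norm_geometric_of_norm_lt_one hp).mul_left ‖z‖
  · simpa only [norm_div] using (summable_norm_pow_succ hp).div_const ‖z‖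

theorem jacobi_triple_product (hp0 : p ≠ 0) (hp : ‖p‖ < 1) (hz : z ≠ 0) :
    (∏' n : ℕ, (1 - p ^ (n + 1))) * ∏' j : ℕ, ((1 + z * p ^ j) * (1 + p ^ (j + 1) / z)) =
      thetaSeries p z := by
  obtain ⟨C, hC⟩ := exists_norm_gaussBinom_le hp
  have hseries : Tendsto (fun N : ℕ => ∑' n : ℤ, gaussBinom p (N + N) (N + n) * thetaTerm p z n)
      atTop (𝓝 (∑' n : ℤ, (∏' n : ℕ, (1 - p ^ (n + 1)))⁻¹ * thetaTerm p z n)) := by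
    refine tendsto_tsum_of_dominated_convergence ((summable_norm_thetaTerm hp0 hp hz).mul_left C)
      (fun n => (tendsto_gaussBinom_central hp n).mul_const _) (.of_forall fun N n => ?_)
    rw [norm_mul]
    gcongr
    exact hC _ _
  have hprod := (multipliable_jacobi_triple_product hp z).hasProd.tendsto_prod_nat
  have hfinite (N : ℕ) := (finite_jacobi_triple_product
    (not_isOfFinOrder_of_norm_lt_one hp) hp0 hz N N).tsum_eq
  simp only [hfinite, ← prod_mul_distrib, tsum_mul_left] at hseries
  rw [tendsto_nhds_unique hprod hseries, thetaSeries,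
    mul_inv_cancel_left₀ (tprod_one_sub_pow_ne_zero hp)]

end TripleProduct

section Addition

variable {𝕜 : Type*} [NormedField 𝕜] [CompleteSpace 𝕜] {p x y z w : 𝕜}

theorem hasSum_thetaTerm_mul_thetaTerm (hp0 : p ≠ 0) (hp : ‖p‖ < 1) (hx : x ≠ 0) (hy : y ≠ 0) :
    HasSum (fun q : ℤ × ℤ => thetaTerm p x q.1 * thetaTerm p y q.2)
      (thetaSeries p x * thetaSeries p y) := by
  have hsx := summable_norm_thetaTerm hp0 hp hx
  have hsy := summable_norm_thetaTerm hp0 hp hy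
  rw [thetaSeries, thetaSeries, tsum_mul_tsum_of_summable_norm hsx hsy]
  exact (summable_mul_of_summable_norm hsx hsy).hasSum

theorem thetaSeries_mul_mul_thetaSeries_div (hp0 : p ≠ 0) (hp : ‖p‖ < 1) (hx : x ≠ 0)
    (hy : y ≠ 0) :
    thetaSeries p (x * y) * thetaSeries p (x / y) =
      thetaSeries (p ^ 2) (x ^ 2) * thetaSeries (p ^ 2) (p * y ^ 2) +
        x / y * (thetaSeries (p ^ 2) (p * x ^ 2) * thetaSeries (p ^ 2) (y ^ 2)) := by
  have hp0' : p ^ 2 ≠ 0 := pow_ne_zero 2 hp0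
  have hp' : ‖p ^ 2‖ < 1 := by simpa using pow_lt_one₀ (norm_nonneg p) hp two_ne_zero
  have hsq {u : 𝕜} (hu : u ≠ 0) : u ^ 2 ≠ 0 := pow_ne_zero 2 hu
  have hmulsq {u : 𝕜} (hu : u ≠ 0) : p * u ^ 2 ≠ 0 := mul_ne_zero hp0 (hsq hu)
  refine (hasSum_thetaTerm_mul_thetaTerm hp0 hp (mul_ne_zero hx hy) (div_ne_zero hx hy)).unique
    (hasSum_prod_of_add_even_of_add_odd ?_ ?_)
  · simpa only [thetaTerm_mul_thetaTerm_of_even hp0 hx hy] using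
      hasSum_thetaTerm_mul_thetaTerm hp0' hp' (hsq hx) (hmulsq hy)
  · simpa only [thetaTerm_mul_thetaTerm_of_odd hp0 hx hy] using
      (hasSum_thetaTerm_mul_thetaTerm hp0' hp' (hmulsq hx) (hsq hy)).mul_left (x / y)

/-- The normalized theta function `θ(z) = ∏_{j≥0} (1 - z pʲ)(1 - pʲ⁺¹/z)` with nome `p` in an
arbitrary normed field; for a real nome and complex `z` it is `theta`. -/
def thetaProd (p z : 𝕜) : 𝕜 :=
  ∏' j : ℕ, ((1 - z * p ^ j) * (1 - p ^ (j + 1) / z))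

theorem thetaProd_eq_inv_mul_thetaSeries (hp0 : p ≠ 0) (hp : ‖p‖ < 1) (hz : z ≠ 0) :
    thetaProd p z = (∏' n : ℕ, (1 - p ^ (n + 1)))⁻¹ * thetaSeries p (-z) := by
  rw [← jacobi_triple_product hp0 hp (neg_ne_zero.2 hz),
    inv_mul_cancel_left₀ (tprod_one_sub_pow_ne_zero hp)]
  simp only [thetaProd, neg_mul, div_neg, ← sub_eq_add_neg]

theorem thetaProd_mul_mul_thetaProd_div (hp0 : p ≠ 0) (hp : ‖p‖ < 1) (hx : x ≠ 0) (hy : y ≠ 0) :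
    thetaProd p (x * y) * thetaProd p (x / y) =
      (∏' n : ℕ, (1 - p ^ (n + 1)))⁻¹ ^ 2 *
        (thetaSeries (p ^ 2) (x ^ 2) * thetaSeries (p ^ 2) (p * y ^ 2) -
          x / y * (thetaSeries (p ^ 2) (p * x ^ 2) * thetaSeries (p ^ 2) (y ^ 2))) := by
  have h := thetaSeries_mul_mul_thetaSeries_div hp0 hp (neg_ne_zero.2 hx) hy
  rw [neg_mul, neg_div, neg_sq] at h
  rw [thetaProd_eq_inv_mul_thetaSeries hp0 hp (mul_ne_zero hx hy),
    thetaProd_eq_inv_mul_thetaSeries hp0 hp (div_ne_zero hx hy)]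
  linear_combination (∏' n : ℕ, (1 - p ^ (n + 1)))⁻¹ ^ 2 * h

theorem theta_addition_general (hp0 : p ≠ 0) (hp : ‖p‖ < 1)
    (hx : x ≠ 0) (hy : y ≠ 0) (hz : z ≠ 0) (hw : w ≠ 0) :
    thetaProd p (x * y) * thetaProd p (x / y) * thetaProd p (z * w) * thetaProd p (z / w) =
      thetaProd p (x * w) * thetaProd p (x / w) * thetaProd p (z * y) * thetaProd p (z / y) +
        z / y * (thetaProd p (x * z) * thetaProd p (x / z) * thetaProd p (y * w) *
          thetaProd p (y / w)) := by
  simp only [mul_assoc _ (thetaProd p (_ * _)) (thetaProd p (_ / _)),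
    thetaProd_mul_mul_thetaProd_div hp0 hp, hx, hy, hz, hw, ne_eq, not_false_eq_true]
  field_simp
  ring

end Addition

/-- The addition formula (Weierstrass three-term identity) for the normalized
Jacobi theta function. -/
theorem theta_addition (p : ℝ) (hp0 : 0 < p) (hp1 : p < 1)
    (x y z w : ℂ) (hx : x ≠ 0) (hy : y ≠ 0) (hz : z ≠ 0) (hw : w ≠ 0) :
    theta p (x * y) * theta p (x / y) * theta p (z * w) * theta p (z / w) =
      theta p (x * w) * theta p (x / w) * theta p (z * y) * theta p (z / y) +
        z / y * (theta p (x * z) * theta p (x / z) * theta p (y * w) * theta p (y / w)) :=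
  theta_addition_general (Complex.ofReal_ne_zero.2 hp0.ne')
    (by simpa [abs_of_pos hp0] using hp1) hx hy hz hw

end
end

section
/- The determinant of the middle 2×2 block of the Andrews–Baxter–Forrester R-matrix equals a(λ,z)d(λ,z) − b(λ,z)c(λ,z) = q²·θ(z q⁻²)/θ(z q²), for all λ ∈ ℂ and nonzero z ∈ ℂ such that θ(q²z), θ(q^{2(λ+1)}) and θ(q^{−2(λ+1)}) are nonzero. -/
noncomputable section

open Finset

/-!
A holomorphic function `f` on `ℂ \ {0}` with `f (p z) = a z⁻ⁿ f z` has Laurent coefficients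
satisfying `pᵏ c_k = a c_{k+n}`, so it is determined by `n` consecutive ones, and any `n + 1` such
functions are linearly dependent. For fixed `x` the antisymmetric function
`S(x, y) = x θ(xy) θ(y/x)` is of this kind in `y` with `n = 2`; hence the antisymmetric `4 × 4`
matrix `S(xᵢ, xⱼ)` is singular and its Pfaffian vanishes. This is the Weierstrass three-term
relation for `θ`, and the determinant formula is its instance at the points `1`, `z`,
`q^{2(λ+1)}`, `q²`.
-/

section LaurentCoefficients

/-- The `k`-th Laurent coefficient at `0` of a function holomorphic on `ℂ \ {0}`, encoded as the
mean of `z ^ (-k) * f z` over the unit circle. -/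
def laurentCoeff (f : ℂ → ℂ) (k : ℤ) : ℂ :=
  Real.circleAverage (fun z => z ^ (-k) * f z) 0 1

variable {f : ℂ → ℂ}

lemma circleAverage_zero_eq_of_differentiableOn (hf : DifferentiableOn ℂ f {0}ᶜ) {r R : ℝ}
    (hr : 0 < r) (hrR : r ≤ R) : Real.circleAverage f 0 R = Real.circleAverage f 0 r := by
  have hne : ∀ z, z ∉ Metric.ball (0 : ℂ) r → z ≠ 0 := by
    rintro z hz rfl
    exact hz (Metric.mem_ball_self hr)
  rw [Real.circleAverage_eq_circleIntegral hr.ne',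
    Real.circleAverage_eq_circleIntegral (hr.trans_le hrR).ne',
    Complex.circleIntegral_sub_center_inv_smul_eq_of_differentiable_on_annulus_off_countable
      hr hrR Set.countable_empty (hf.continuousOn.mono fun z hz => hne z hz.2)]
  intro z hz
  exact hf.differentiableAt <| isOpen_compl_singleton.mem_nhds <|
    hne z fun h => hz.1.2 (Metric.ball_subset_closedBall h)

lemma circleAverage_comp_mul_left (f : ℂ → ℂ) (w : ℂ) :
    Real.circleAverage (fun z => f (w * z)) 0 1 = Real.circleAverage f 0 ‖w‖ := by
  have hrot : ∀ θ : ℝ, w * circleMap 0 1 θ = circleMap 0 ‖w‖ (θ + w.arg) := fun θ => by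
    rw [← one_mul ‖w‖, ← circleMap_zero_mul, circleMap_zero ‖w‖,
      Complex.norm_mul_exp_arg_mul_I, mul_comm]
  rw [Real.circleAverage_eq_integral_add (f := f) w.arg, Real.circleAverage_def]
  simp only [hrot]

lemma circleAverage_comp_mul_left_of_differentiableOn (hf : DifferentiableOn ℂ f {0}ᶜ) {w : ℂ}
    (hw : w ≠ 0) :
    Real.circleAverage (fun z => f (w * z)) 0 1 = Real.circleAverage f 0 1 := by
  rw [circleAverage_comp_mul_left]
  rcases le_total ‖w‖ 1 with h | h
  · exact (circleAverage_zero_eq_of_differentiableOn hf (norm_pos_iff.2 hw) h).symm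
  · exact circleAverage_zero_eq_of_differentiableOn hf one_pos h

lemma laurentCoeff_congr {g : ℂ → ℂ} (h : ∀ z ≠ 0, f z = g z) (k : ℤ) :
    laurentCoeff f k = laurentCoeff g k :=
  Real.circleAverage_congr_sphere fun z hz => by
    simp only [h z (ne_zero_of_mem_sphere (by simp) ⟨z, hz⟩)]

lemma laurentCoeff_const_mul_zpow_mul (f : ℂ → ℂ) (a : ℂ) (m k : ℤ) :
    laurentCoeff (fun z => a * z ^ m * f z) k = a * laurentCoeff f (k - m) := by
  rw [laurentCoeff, laurentCoeff, ← smul_eq_mul, ← Real.circleAverage_fun_smul]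
  refine Real.circleAverage_congr_sphere fun z hz => ?_
  have hz : z ≠ 0 := ne_zero_of_mem_sphere (by simp) ⟨z, hz⟩
  simp only [smul_eq_mul, neg_sub, sub_eq_add_neg m, zpow_add₀ hz]
  ring

lemma laurentCoeff_comp_mul_left (hf : DifferentiableOn ℂ f {0}ᶜ) {w : ℂ} (hw : w ≠ 0) (k : ℤ) :
    laurentCoeff (fun z => f (w * z)) k = w ^ k * laurentCoeff f k := by
  have hg : DifferentiableOn ℂ (fun z => z ^ (-k) * f z) {0}ᶜ := fun z hz =>
    (differentiableAt_zpow.2 (.inl hz)).differentiableWithinAt.mul (hf z hz)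
  rw [laurentCoeff, laurentCoeff, ← circleAverage_comp_mul_left_of_differentiableOn hg hw,
    ← smul_eq_mul, ← Real.circleAverage_fun_smul]
  simp only [smul_eq_mul, mul_zpow, zpow_neg, ← mul_assoc, mul_inv_cancel₀ (zpow_ne_zero k hw),
    mul_inv, one_mul]

lemma laurentCoeff_sum {ι : Type*} [Fintype ι] {f : ι → ℂ → ℂ}
    (hf : ∀ i, ContinuousOn (f i) {0}ᶜ) (α : ι → ℂ) (k : ℤ) :
    laurentCoeff (fun z => ∑ i, α i * f i z) k = ∑ i, α i * laurentCoeff (f i) k := by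
  have hint : ∀ i, CircleIntegrable (fun z => α i * (z ^ (-k) * f i z)) 0 1 := fun i => by
    have hne : ∀ z ∈ Metric.sphere (0 : ℂ) 1, z ≠ 0 := fun z hz =>
      ne_zero_of_mem_sphere one_ne_zero ⟨z, hz⟩
    exact (continuousOn_const.mul ((continuousOn_id.zpow₀ _ fun z hz => .inl (hne z hz)).mul
      ((hf i).mono hne))).circleIntegrable zero_le_one
  calc laurentCoeff (fun z => ∑ i, α i * f i z) k
      = Real.circleAverage (fun z => ∑ i, α i * (z ^ (-k) * f i z)) 0 1 := by
        simp only [laurentCoeff, mul_sum, mul_left_comm]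
    _ = ∑ i, Real.circleAverage (fun z => α i * (z ^ (-k) * f i z)) 0 1 :=
        Real.circleAverage_fun_sum fun i _ => hint i
    _ = ∑ i, α i * laurentCoeff (f i) k :=
        sum_congr rfl fun i _ => Real.circleAverage_fun_smul (a := α i)

lemma laurentCoeff_eq_fourierCoeff (T : ℝ) [hT : Fact (0 < T)] (f : ℂ → ℂ) (k : ℤ) :
    laurentCoeff f k = fourierCoeff (fun t : AddCircle T => f (AddCircle.toCircle t)) k := by
  have hT0 : 2 * Real.pi / T ≠ 0 := (div_pos Real.two_pi_pos hT.out).ne'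
  have hint : ∀ x : ℝ, fourier (-k) (x : AddCircle T) • f (AddCircle.toCircle (x : AddCircle T)) =
      circleMap 0 1 (2 * Real.pi / T * x) ^ (-k) * f (circleMap 0 1 (2 * Real.pi / T * x)) :=
    fun x => by
      simp only [fourier_apply, AddCircle.toCircle_zsmul, AddCircle.toCircle_apply_mk,
        Circle.coe_zpow, Circle.coe_exp, circleMap_zero, Complex.ofReal_one, one_mul, smul_eq_mul]
  rw [fourierCoeff_eq_intervalIntegral _ _ 0, zero_add]
  simp only [hint]
  rw [intervalIntegral.integral_comp_mul_left
      (fun θ => circleMap 0 1 θ ^ (-k) * f (circleMap 0 1 θ)) hT0,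
    mul_zero, div_mul_cancel₀ _ hT.out.ne', smul_smul, one_div, ← mul_inv,
    mul_div_cancel₀ _ hT.out.ne', laurentCoeff, Real.circleAverage_def]

lemma eq_zero_of_laurentCoeff_eq_zero (hf : DifferentiableOn ℂ f {0}ᶜ)
    (h : ∀ k, laurentCoeff f k = 0) {w : ℂ} (hw : w ≠ 0) : f w = 0 := by
  have : Fact (0 < 2 * Real.pi) := ⟨Real.two_pi_pos⟩
  let F : C(AddCircle (2 * Real.pi), ℂ) :=
    { toFun t := f (w * AddCircle.toCircle t)
      continuous_toFun := hf.continuousOn.comp_continuous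
        (by have := AddCircle.continuous_toCircle (T := 2 * Real.pi); fun_prop)
        fun t => mul_ne_zero hw (Circle.coe_ne_zero _) }
  have hF : fourierCoeff F = 0 := funext fun k => by
    have := laurentCoeff_eq_fourierCoeff (2 * Real.pi) (fun z => f (w * z)) k
    rw [laurentCoeff_comp_mul_left hf hw, h, mul_zero] at this
    exact this.symm
  have hsum := has_pointwise_sum_fourier_series_of_summable (f := F)
    (by rw [hF]; exact summable_zero) 0
  simpa [F] using hsum.unique (by simp [hF])

end LaurentCoefficients

section ThetaFunctions

/-- Holomorphic functions on `ℂ \ {0}` with the quasi-periodicity `f (p z) = a z⁻ⁿ f z`: theta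
functions of degree `n` with nome `p` and multiplier `a`, in multiplicative notation. -/
structure IsThetaFunction (p a : ℂ) (n : ℕ) (f : ℂ → ℂ) : Prop where
  differentiableOn : DifferentiableOn ℂ f {0}ᶜ
  apply_mul : ∀ z ≠ 0, f (p * z) = a * z ^ (-n : ℤ) * f z

variable {p a : ℂ} {n : ℕ} {ι : Type*} [Fintype ι]

lemma IsThetaFunction.sum {f : ι → ℂ → ℂ} (hf : ∀ i, IsThetaFunction p a n (f i)) (α : ι → ℂ) :
    IsThetaFunction p a n fun z => ∑ i, α i * f i z where
  differentiableOn := DifferentiableOn.fun_sum fun i _ => (hf i).differentiableOn.const_mul (α i)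
  apply_mul z hz := by simp only [(hf _).apply_mul z hz, mul_sum, mul_left_comm]

lemma IsThetaFunction.zpow_mul_laurentCoeff {f : ℂ → ℂ} (hf : IsThetaFunction p a n f) (hp : p ≠ 0)
    (k : ℤ) : p ^ k * laurentCoeff f k = a * laurentCoeff f (k + n) := by
  rw [← laurentCoeff_comp_mul_left hf.differentiableOn hp, laurentCoeff_congr hf.apply_mul,
    laurentCoeff_const_mul_zpow_mul, sub_neg_eq_add]

lemma IsThetaFunction.eq_zero_of_fin_laurentCoeff_eq_zero {f : ℂ → ℂ}
    (hf : IsThetaFunction p a n f) (hp : p ≠ 0) (ha : a ≠ 0) (hn : n ≠ 0)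
    (h : ∀ k : Fin n, laurentCoeff f (k : ℕ) = 0) {z : ℂ} (hz : z ≠ 0) : f z = 0 := by
  have hper : Function.Periodic (fun k : ℤ => laurentCoeff f k = 0) n := fun k => propext <| by
    change laurentCoeff f (k + n) = 0 ↔ laurentCoeff f k = 0
    rw [← mul_eq_zero_iff_left ha, ← hf.zpow_mul_laurentCoeff hp,
      mul_eq_zero_iff_left (zpow_ne_zero k hp)]
  refine eq_zero_of_laurentCoeff_eq_zero hf.differentiableOn (fun k => ?_) hz
  have hn' : (0 : ℤ) < n := by exact_mod_cast Nat.pos_of_ne_zero hn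
  obtain ⟨m, hm⟩ := Int.eq_ofNat_of_zero_le (Int.emod_nonneg k hn'.ne')
  have hmn : m < n := by exact_mod_cast hm ▸ Int.emod_lt_of_pos k hn'
  have hkm : (laurentCoeff f (k % n + k / n * n) = 0) = (laurentCoeff f (k % n) = 0) :=
    hper.int_mul (k / n) (k % n)
  rw [mul_comm (k / _), Int.emod_add_mul_ediv, hm] at hkm
  exact hkm.mpr (h ⟨m, hmn⟩)

lemma exists_sum_mul_eq_zero_of_isThetaFunction {f : ι → ℂ → ℂ}
    (hf : ∀ i, IsThetaFunction p a n (f i)) (hp : p ≠ 0) (ha : a ≠ 0) (hn : n ≠ 0)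
    (hcard : n < Fintype.card ι) :
    ∃ α : ι → ℂ, α ≠ 0 ∧ ∀ z ≠ 0, ∑ i, α i * f i z = 0 := by
  let c : ι → Fin n → ℂ := fun i k => laurentCoeff (f i) (k : ℕ)
  have hdep : ¬ LinearIndependent ℂ c := fun hli =>
    hcard.not_ge <| by simpa using hli.fintype_card_le_finrank
  obtain ⟨α, hα, i, hi⟩ := Fintype.not_linearIndependent_iff.1 hdep
  refine ⟨α, fun h => hi (congrFun h i), fun z hz =>
    (IsThetaFunction.sum hf α).eq_zero_of_fin_laurentCoeff_eq_zero hp ha hn (fun k => ?_) hz⟩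
  rw [laurentCoeff_sum fun i => (hf i).differentiableOn.continuousOn]
  simpa [c] using congrFun hα k

lemma det_eq_zero_of_isThetaFunction [DecidableEq ι] {f : ι → ℂ → ℂ}
    (hf : ∀ i, IsThetaFunction p a n (f i)) (hp : p ≠ 0) (ha : a ≠ 0) (hn : n ≠ 0)
    (hcard : n < Fintype.card ι) {z : ι → ℂ} (hz : ∀ j, z j ≠ 0) :
    (Matrix.of fun i j => f i (z j)).det = 0 := by
  obtain ⟨α, hα, hsum⟩ := exists_sum_mul_eq_zero_of_isThetaFunction hf hp ha hn hcard
  exact Matrix.exists_vecMul_eq_zero_iff.1 ⟨α, hα, funext fun j => hsum _ (hz j)⟩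

end ThetaFunctions

lemma det_fin_four_eq_pfaffian_sq {R : Type*} [CommRing R] {M : Matrix (Fin 4) (Fin 4) R}
    (hdiag : ∀ i, M i i = 0) (hM : ∀ i j, M j i = -M i j) :
    M.det = (M 0 1 * M 2 3 - M 0 2 * M 1 3 + M 0 3 * M 1 2) ^ 2 := by
  have h1 : (Fin.succAbove 1 : Fin 3 → Fin 4) = ![0, 2, 3] := by decide
  have h2 : (Fin.succAbove 2 : Fin 3 → Fin 4) = ![0, 1, 3] := by decide
  have h3 : (Fin.succAbove 3 : Fin 3 → Fin 4) = ![0, 1, 2] := by decide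
  simp only [Matrix.det_succ_row_zero (n := 3), Fin.sum_univ_four, Matrix.det_fin_three,
    Matrix.submatrix_apply, h1, h2, h3, Fin.succAbove_zero, hdiag, Fin.succ_zero_eq_one,
    Fin.succ_one_eq_two, Fin.reduceSucc, Matrix.cons_val,
    Fin.coe_ofNat_eq_mod, hM 0 1, hM 0 2, hM 0 3, hM 1 2, hM 1 3, hM 2 3]
  ring

section QPochhammer

/-- The infinite `q`-Pochhammer symbol `(z; p)_∞`. -/
def qPochhammerInf (p z : ℂ) : ℂ := ∏' j : ℕ, (1 - z * p ^ j)

variable {p : ℂ}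

lemma multipliable_one_sub_mul_pow (hp : ‖p‖ < 1) (z : ℂ) :
    Multipliable fun j : ℕ => 1 - z * p ^ j := by
  simp only [sub_eq_add_neg]
  refine multipliable_one_add_of_summable ?_
  simpa [norm_mul, norm_pow] using (summable_geometric_of_lt_one (norm_nonneg p) hp).mul_left ‖z‖

lemma qPochhammerInf_eq_mul (hp : ‖p‖ < 1) (z : ℂ) :
    qPochhammerInf p z = (1 - z) * qPochhammerInf p (p * z) := by
  have hshift : ∀ j : ℕ, 1 - z * p ^ (j + 1) = 1 - p * z * p ^ j := fun j => by ring
  rw [qPochhammerInf, tprod_eq_zero_mul' (by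
    simpa only [hshift] using multipliable_one_sub_mul_pow hp (p * z))]
  simp only [pow_zero, mul_one, hshift, qPochhammerInf]

lemma differentiable_qPochhammerInf (hp : ‖p‖ < 1) : Differentiable ℂ (qPochhammerInf p) := by
  intro z
  have hz : z ∈ Metric.ball (0 : ℂ) (‖z‖ + 1) := by simp
  have hprod := Summable.hasProdLocallyUniformlyOn_nat_one_add (f := fun j z => -(z * p ^ j))
    (Metric.isOpen_ball (x := (0 : ℂ)) (ε := ‖z‖ + 1))
    ((summable_geometric_of_lt_one (norm_nonneg p) hp).mul_left (‖z‖ + 1))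
    (.of_forall fun j w hw => by
      rw [norm_neg, norm_mul, norm_pow]
      gcongr
      exact (mem_ball_zero_iff.1 hw).le)
    (fun j => by fun_prop)
  simp only [← sub_eq_add_neg] at hprod
  exact (hprod.differentiableOn (.of_forall fun s => by
    simpa [Finset.prod_fn] using DifferentiableOn.finsetProd (fun _ _ => by fun_prop))
    Metric.isOpen_ball).differentiableAt (Metric.isOpen_ball.mem_nhds hz)

end QPochhammer

section Theta

variable {p : ℝ}

lemma theta_eq_qPochhammerInf_mul (hp : |p| < 1) (z : ℂ) :
    theta p z = qPochhammerInf p z * qPochhammerInf p (p / z) := by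
  have hp' : ‖(p : ℂ)‖ < 1 := by simpa using hp
  rw [theta, qPochhammerInf, qPochhammerInf, ← (multipliable_one_sub_mul_pow hp' z).tprod_mul
    (multipliable_one_sub_mul_pow hp' (p / z))]
  simp only [pow_succ', div_mul_eq_mul_div]

lemma theta_inv (hp : |p| < 1) {z : ℂ} (hz : z ≠ 0) : theta p z⁻¹ = -z⁻¹ * theta p z := by
  have hp' : ‖(p : ℂ)‖ < 1 := by simpa using hp
  rw [theta_eq_qPochhammerInf_mul hp, theta_eq_qPochhammerInf_mul hp,
    qPochhammerInf_eq_mul hp' z⁻¹, qPochhammerInf_eq_mul hp' z, div_inv_eq_mul, ← div_eq_mul_inv]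
  field_simp
  ring

lemma theta_mul_nome (hp : |p| < 1) (hp0 : p ≠ 0) {z : ℂ} (hz : z ≠ 0) :
    theta p (p * z) = -z⁻¹ * theta p z := by
  have hp0' : (p : ℂ) ≠ 0 := by exact_mod_cast hp0
  rw [← theta_inv hp hz, theta_eq_qPochhammerInf_mul hp, theta_eq_qPochhammerInf_mul hp,
    div_mul_cancel_left₀ hp0', div_inv_eq_mul, mul_comm]

lemma theta_zero_nome (z : ℂ) : theta 0 z = 1 - z := by
  rw [theta, tprod_eq_mulSingle 0 fun j hj => by simp [hj]]
  simp

lemma differentiableOn_theta (hp : |p| < 1) : DifferentiableOn ℂ (theta p) {0}ᶜ := by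
  have hP : Differentiable ℂ (qPochhammerInf p) := differentiable_qPochhammerInf (by simpa using hp)
  have hdiv : DifferentiableOn ℂ (fun z : ℂ => p / z) {0}ᶜ :=
    (differentiableOn_const _).div differentiableOn_id fun z hz => hz
  refine (hP.differentiableOn.mul (hP.comp_differentiableOn hdiv)).congr fun z _ => ?_
  exact theta_eq_qPochhammerInf_mul hp z

/-- The antisymmetric product `x θ(xy) θ(y/x)`, in terms of which the Weierstrass three-term
relation for `θ` is a Plücker relation. -/
def thetaPairing (p : ℝ) (x y : ℂ) : ℂ := x * theta p (x * y) * theta p (y / x)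

lemma thetaPairing_swap (hp : |p| < 1) {x y : ℂ} (hx : x ≠ 0) (hy : y ≠ 0) :
    thetaPairing p y x = -thetaPairing p x y := by
  rw [thetaPairing, thetaPairing, ← inv_div y x, theta_inv hp (div_ne_zero hy hx), mul_comm y x]
  field_simp

lemma thetaPairing_self (hp : |p| < 1) {x : ℂ} (hx : x ≠ 0) : thetaPairing p x x = 0 :=
  CharZero.eq_neg_self_iff.1 (thetaPairing_swap hp hx hx)

lemma isThetaFunction_thetaPairing (hp : |p| < 1) (hp0 : p ≠ 0) {x : ℂ} (hx : x ≠ 0) :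
    IsThetaFunction p 1 2 (thetaPairing p x) where
  differentiableOn := by
    have hθ := differentiableOn_theta hp
    exact ((hθ.comp (by fun_prop) fun y hy => mul_ne_zero hx hy).const_mul x).mul
      (hθ.comp (by fun_prop) fun y hy => div_ne_zero hy hx)
  apply_mul y hy := by
    rw [thetaPairing, thetaPairing, mul_left_comm, mul_div_assoc,
      theta_mul_nome hp hp0 (mul_ne_zero hx hy), theta_mul_nome hp hp0 (div_ne_zero hy hx)]
    simp only [zpow_neg, Nat.cast_ofNat, zpow_ofNat]
    field_simp

theorem thetaPairing_three_term (hp : |p| < 1) {x y u v : ℂ} (hx : x ≠ 0) (hy : y ≠ 0)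
    (hu : u ≠ 0) (hv : v ≠ 0) :
    thetaPairing p x y * thetaPairing p u v - thetaPairing p x u * thetaPairing p y v +
      thetaPairing p x v * thetaPairing p y u = 0 := by
  rcases eq_or_ne p 0 with rfl | hp0
  · simp only [thetaPairing, theta_zero_nome]
    field_simp
    ring
  let w : Fin 4 → ℂ := ![x, y, u, v]
  have hw : ∀ i, w i ≠ 0 := by simp [w, Fin.forall_fin_succ, hx, hy, hu, hv]
  have hdet := det_eq_zero_of_isThetaFunction
    (fun i => isThetaFunction_thetaPairing hp hp0 (hw i)) (Complex.ofReal_ne_zero.2 hp0)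
    one_ne_zero two_ne_zero (by simp) hw
  have hpf := det_fin_four_eq_pfaffian_sq (M := Matrix.of fun i j => thetaPairing p (w i) (w j))
    (fun i => thetaPairing_self hp (hw i)) (fun i j => thetaPairing_swap hp (hw i) (hw j))
  exact pow_eq_zero_iff two_ne_zero |>.1 (hpf.symm.trans hdet)

lemma theta_sq_mul_sub_theta_sq_mul (hp : |p| < 1) {z t w : ℂ} (hz : z ≠ 0) (ht : t ≠ 0)
    (hw : w ≠ 0) :
    theta p z ^ 2 * theta p (t * w) * theta p (t / w) -
        theta p t ^ 2 * theta p (w⁻¹ * z) * theta p (w * z) =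
      t * theta p (z / t) * theta p (t * z) * theta p w * theta p w⁻¹ := by
  have h := thetaPairing_three_term hp one_ne_zero hz hw ht
  simp only [thetaPairing, one_mul, div_one] at h
  rw [← inv_div z w, theta_inv hp (div_ne_zero hz hw), ← inv_div z t,
    theta_inv hp (div_ne_zero hz ht)] at h
  rw [theta_inv hp hw, mul_comm t w, mul_comm t z, mul_comm w z, inv_mul_eq_div]
  field_simp at h ⊢
  linear_combination h

end Theta

section Rmatrix

lemma qp_add (q : ℝ) (l m : ℂ) : qp q (l + m) = qp q l * qp q m := by
  rw [qp, add_mul, Complex.exp_add, qp, qp]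

lemma qp_neg (q : ℝ) (l : ℂ) : qp q (-l) = (qp q l)⁻¹ := by
  rw [qp, neg_mul, Complex.exp_neg, qp]

lemma qp_ne_zero (q : ℝ) (l : ℂ) : qp q l ≠ 0 := Complex.exp_ne_zero _

theorem Rmatrix_det_general {p q : ℝ} (hp : |p| < 1) (_hq : 0 < q) {lam z : ℂ} (hz : z ≠ 0)
    (h1 : theta p (qp q 2 * z) ≠ 0) (h2 : theta p (qp q (2 * (lam + 1))) ≠ 0) :
    Ra p q lam z * Rd p q lam z - Rb p q lam z * Rc p q lam z =
      qp q 2 * theta p (z * qp q (-2)) / theta p (z * qp q 2) := by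
  have ha : qp q (2 * (lam + 2)) = qp q 2 * qp q (2 * (lam + 1)) := by
    rw [← qp_add]; ring_nf
  have hd : qp q (-2 * lam) = qp q 2 / qp q (2 * (lam + 1)) := by
    rw [div_eq_mul_inv, ← qp_neg, ← qp_add]; ring_nf
  have hw : qp q (-2 * (lam + 1)) = (qp q (2 * (lam + 1)))⁻¹ := by rw [neg_mul, qp_neg]
  have hw0 := qp_ne_zero q (2 * (lam + 1))
  have h3 : theta p (qp q (2 * (lam + 1)))⁻¹ ≠ 0 := by
    rw [theta_inv hp hw0]
    exact mul_ne_zero (neg_ne_zero.2 (inv_ne_zero hw0)) h2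
  rw [Ra, Rb, Rc, Rd, ha, hd, hw, qp_neg, mul_comm z (qp q 2), ← div_eq_mul_inv z,
    div_mul_div_comm, div_mul_div_comm, mul_comm (theta p (qp q 2 * z) * theta p _⁻¹),
    div_sub_div_same, div_eq_div_iff (mul_ne_zero (mul_ne_zero h1 h2) (mul_ne_zero h1 h3)) h1]
  linear_combination
    theta p (qp q 2 * z) * theta_sq_mul_sub_theta_sq_mul hp hz (qp_ne_zero q 2) hw0

end Rmatrix

/-- The determinant of the middle 2×2 block of the ABF `R`-matrix:
`a(λ,z)d(λ,z) − b(λ,z)c(λ,z) = q² θ(z q⁻²)/θ(z q²)`. -/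
theorem Rmatrix_det (p q : ℝ) (hp0 : 0 < p) (hp1 : p < 1) (hq0 : 0 < q) (hq1 : q < 1)
    (lam z : ℂ) (hz : z ≠ 0)
    (h1 : theta p (qp q 2 * z) ≠ 0)
    (h2 : theta p (qp q (2 * (lam + 1))) ≠ 0)
    (h3 : theta p (qp q (-2 * (lam + 1))) ≠ 0) :
    Ra p q lam z * Rd p q lam z - Rb p q lam z * Rc p q lam z =
      qp q 2 * theta p (z * qp q (-2)) / theta p (z * qp q 2) := by
  exact Rmatrix_det_general (abs_lt.2 ⟨by linarith, hp1⟩) hq0 hz h1 h2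

end
end
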